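/- For every integer h divisible by 4 with h ≥ 4, the quantity σ(h)² satisfies 1 − 3/π < σ(h)² ≤ σ(4)² = 1/4, and σ(·)² is monotonic decreasing along multiples of 4, i.e. σ(h+4)² < σ(h)²; moreover σ(h)² → 1 − 3/π as h → ∞. -/

import Mathlib

/-!
With `u n = (binom(2n, n) / 4 ^ n) ^ 2` we have
`σ(4k)² = 1 + 2k(4k - 1) u(k) - 16k² u(2k)`, so everything rests on precise estimates for `u`.
Wallis' product gives `n u(n) → 1 / π`, and the expansion
`1 / (π u(n)) = n + 1/4 + 1/(32n + 8) + O(n⁻³)` suggests two corrected weights: `(n + 1/4) u(n)`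
increases to `1 / π`, while `(n + 1/4 + 1/(32n + 8)) u(n)` decreases to it.
The resulting enclosure of `u(n)` has relative error `O(n⁻²)`. This determines `n² u(n)` up to
`o(1)`, hence the limit of `σ(4k)²`, and it is also sharp enough to decide the sign of
`σ(4k)² - σ(4k + 4)²`, a combination of `u(k)` and `u(2k)` with rational coefficients.
-/

open Filter

/-- `σ(h)² = 1 + h(h−1) 2^{−(h+1)} binom(h/2, h/4)² − h² 2^{−2h} binom(h, h/2)²`. -/
noncomputable def sigmaSq (h : ℕ) : ℝ :=
  1 + (h : ℝ) * ((h : ℝ) - 1) * (2 : ℝ) ^ (-((h : ℤ) + 1)) *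
        ((h / 2).choose (h / 4) : ℝ) ^ 2 -
    (h : ℝ) ^ 2 * (2 : ℝ) ^ (-(2 * (h : ℤ))) * (h.choose (h / 2) : ℝ) ^ 2

open scoped Real Topology

/-- The square of the probability `binom(2n, n) / 4 ^ n` that a simple random walk on `ℤ` is back
at its starting point after `2n` steps; `sigmaSq (4 * k)` depends on binomial coefficients only
through its values at `k` and `2 * k`. -/
noncomputable def returnProbSq (n : ℕ) : ℝ := ((n.centralBinom : ℝ) / 4 ^ n) ^ 2

lemma returnProbSq_pos (n : ℕ) : 0 < returnProbSq n := by
  have : (0 : ℝ) < n.centralBinom := mod_cast n.centralBinom_pos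
  unfold returnProbSq
  positivity

lemma returnProbSq_succ (n : ℕ) :
    returnProbSq (n + 1) = returnProbSq n * ((2 * n + 1) / (2 * n + 2)) ^ 2 := by
  have hrec : ((n : ℝ) + 1) * (n + 1).centralBinom = 2 * (2 * n + 1) * n.centralBinom :=
    mod_cast n.succ_mul_centralBinom_succ
  have hsucc : ((n + 1).centralBinom : ℝ) = 2 * (2 * n + 1) * n.centralBinom / (n + 1) := by
    rw [← hrec]
    field_simp
  rw [returnProbSq, returnProbSq, hsucc, ← mul_pow, pow_succ (4 : ℝ) n]
  congr 1
  field_simp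
  ring

lemma returnProbSq_two_mul_succ (n : ℕ) :
    returnProbSq (2 * (n + 1)) =
      returnProbSq (2 * n) * ((4 * n + 1) * (4 * n + 3) / ((4 * n + 2) * (4 * n + 4))) ^ 2 := by
  rw [show 2 * (n + 1) = 2 * n + 1 + 1 by ring, returnProbSq_succ, returnProbSq_succ]
  push_cast
  field_simp
  ring

lemma returnProbSq_mul_wallis (n : ℕ) :
    returnProbSq n * (2 * n + 1) * Real.Wallis.W n = 1 := by
  induction n with
  | zero => simp [returnProbSq, Real.Wallis.W]
  | succ n ih =>
    refine Eq.trans ?_ ih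
    rw [returnProbSq_succ, Real.Wallis.W_succ]
    push_cast
    field_simp
    ring

lemma tendsto_two_mul_add_one_mul_returnProbSq :
    Tendsto (fun n : ℕ ↦ (2 * n + 1) * returnProbSq n) atTop (𝓝 (2 / π)) := by
  have hW := Real.Wallis.tendsto_W_nhds_pi_div_two.inv₀ (by positivity)
  rw [inv_div] at hW
  refine hW.congr fun n ↦ (eq_inv_of_mul_eq_one_left ?_).symm
  rw [mul_comm _ (returnProbSq n), returnProbSq_mul_wallis]

lemma tendsto_returnProbSq : Tendsto returnProbSq atTop (𝓝 0) := by
  have hinv : Tendsto (fun n : ℕ ↦ (2 * (n : ℝ) + 1)⁻¹) atTop (𝓝 0) :=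
    tendsto_inv_atTop_zero.comp <| tendsto_atTop_add_const_right _ _ <|
      tendsto_natCast_atTop_atTop.const_mul_atTop two_pos
  have h := hinv.mul tendsto_two_mul_add_one_mul_returnProbSq
  rw [zero_mul] at h
  exact h.congr fun n ↦ inv_mul_cancel_left₀ (by positivity) _

lemma tendsto_natCast_add_mul_returnProbSq {c : ℕ → ℝ} {l : ℝ} (hc : Tendsto c atTop (𝓝 l)) :
    Tendsto (fun n : ℕ ↦ (n + c n) * returnProbSq n) atTop (𝓝 (1 / π)) := by
  have h := (tendsto_two_mul_add_one_mul_returnProbSq.div_const 2).add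
    ((hc.sub_const (1 / 2)).mul tendsto_returnProbSq)
  rw [mul_zero, add_zero, div_right_comm, div_self two_ne_zero] at h
  exact h.congr fun n ↦ by ring

lemma tendsto_natCast_mul_returnProbSq :
    Tendsto (fun n : ℕ ↦ n * returnProbSq n) atTop (𝓝 (1 / π)) := by
  simpa only [add_zero] using tendsto_natCast_add_mul_returnProbSq (tendsto_const_nhds (x := 0))

lemma strictMono_add_quarter_mul_returnProbSq :
    StrictMono fun n : ℕ ↦ ((n : ℝ) + 1 / 4) * returnProbSq n := by
  refine strictMono_nat_of_lt_succ fun n ↦ ?_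
  have hweight : (n + 1 / 4 : ℝ) < (n + 1 + 1 / 4) * ((2 * n + 1) / (2 * n + 2)) ^ 2 := by
    rw [div_pow, ← mul_div_assoc, lt_div_iff₀ (by positivity)]
    linarith
  rw [returnProbSq_succ, Nat.cast_succ, mul_left_comm, mul_comm]
  exact mul_lt_mul_of_pos_left hweight (returnProbSq_pos n)

lemma strictAnti_add_quarter_add_inv_mul_returnProbSq :
    StrictAnti fun n : ℕ ↦ ((n : ℝ) + (1 / 4 + 1 / (32 * n + 8))) * returnProbSq n := by
  refine strictAnti_nat_of_succ_lt fun n ↦ ?_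
  have hweight : (n + 1 + (1 / 4 + 1 / (32 * (n + 1) + 8)) : ℝ) * ((2 * n + 1) / (2 * n + 2)) ^ 2 <
      n + (1 / 4 + 1 / (32 * n + 8)) := by
    rw [← sub_pos]
    calc (0 : ℝ) < 9 / (8 * (4 * n + 1) * (4 * n + 5) * (2 * n + 2) ^ 2) := by positivity
      _ = _ := by field_simp; ring
  rw [returnProbSq_succ, Nat.cast_succ, mul_left_comm, mul_comm _ (returnProbSq n)]
  exact mul_lt_mul_of_pos_left hweight (returnProbSq_pos n)

lemma add_quarter_mul_returnProbSq_lt (n : ℕ) : (n + 1 / 4) * returnProbSq n < 1 / π :=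
  (strictMono_add_quarter_mul_returnProbSq n.lt_succ_self).trans_le <|
    strictMono_add_quarter_mul_returnProbSq.monotone.ge_of_tendsto
      (tendsto_natCast_add_mul_returnProbSq tendsto_const_nhds) _

lemma lt_add_quarter_add_inv_mul_returnProbSq (n : ℕ) :
    1 / π < (n + (1 / 4 + 1 / (32 * n + 8))) * returnProbSq n := by
  have hcorr : Tendsto (fun n : ℕ ↦ (1 : ℝ) / (32 * n + 8)) atTop (𝓝 0) :=
    tendsto_const_nhds.div_atTop <| tendsto_atTop_add_const_right _ _ <|
      tendsto_natCast_atTop_atTop.const_mul_atTop (by norm_num)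
  exact (strictAnti_add_quarter_add_inv_mul_returnProbSq.antitone.le_of_tendsto
    (tendsto_natCast_add_mul_returnProbSq (hcorr.const_add (1 / 4))) _).trans_lt
    (strictAnti_add_quarter_add_inv_mul_returnProbSq n.lt_succ_self)

lemma tendsto_natCast_mul_sub_mul_returnProbSq :
    Tendsto (fun n : ℕ ↦ n * (1 / π - (n + 1 / 4) * returnProbSq n)) atTop (𝓝 0) := by
  refine squeeze_zero (fun n ↦ ?_) (fun n ↦ ?_) tendsto_returnProbSq
  · exact mul_nonneg n.cast_nonneg (sub_nonneg.2 (add_quarter_mul_returnProbSq_lt n).le)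
  · have hu := returnProbSq_pos n
    calc n * (1 / π - (n + 1 / 4) * returnProbSq n)
        ≤ n * (1 / (32 * n + 8) * returnProbSq n) := by
          gcongr
          linarith [lt_add_quarter_add_inv_mul_returnProbSq n]
      _ = n / (32 * n + 8) * returnProbSq n := by ring
      _ ≤ 1 * returnProbSq n := by
          gcongr
          rw [div_le_one (by positivity)]
          linarith [(n.cast_nonneg : (0 : ℝ) ≤ n)]
      _ = returnProbSq n := one_mul _

lemma tendsto_sq_mul_returnProbSq_sub :
    Tendsto (fun n : ℕ ↦ n ^ 2 * returnProbSq n - n / π) atTop (𝓝 (-(1 / (4 * π)))) := by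
  have h := (tendsto_natCast_mul_sub_mul_returnProbSq.add
    (tendsto_natCast_mul_returnProbSq.const_mul (1 / 4))).neg
  rw [zero_add, div_mul_div_comm, one_mul] at h
  exact h.congr fun n ↦ by ring

lemma sigmaSq_four_mul (k : ℕ) :
    sigmaSq (4 * k) =
      1 + 2 * k * (4 * k - 1) * returnProbSq k - 16 * (k : ℝ) ^ 2 * returnProbSq (2 * k) := by
  have hhalf : 4 * k / 2 = 2 * k := by lia
  have hquarter : 4 * k / 4 = k := by lia
  have hpow : (2 : ℝ) ^ (4 * k) = (4 ^ k) ^ 2 := by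
    rw [← pow_mul, show (4 : ℝ) = 2 ^ 2 by norm_num, ← pow_mul]
    ring_nf
  have hfirst : (2 : ℝ) ^ (-(((4 * k : ℕ) : ℤ) + 1)) = ((4 ^ k) ^ 2 * 2)⁻¹ := by
    rw [zpow_neg, zpow_add_one₀ two_ne_zero, zpow_natCast, hpow]
  have hsecond : (2 : ℝ) ^ (-(2 * ((4 * k : ℕ) : ℤ))) = ((4 ^ (2 * k)) ^ 2)⁻¹ := by
    rw [zpow_neg, mul_comm, zpow_mul, zpow_natCast, hpow, mul_comm 2 k, pow_mul, zpow_ofNat]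
  rw [sigmaSq, hfirst, hsecond, hhalf, hquarter, returnProbSq, returnProbSq,
    Nat.centralBinom_eq_two_mul_choose, Nat.centralBinom_eq_two_mul_choose, ← mul_assoc 2 2 k]
  push_cast
  field_simp
  ring

lemma sigmaSq_four : sigmaSq 4 = 1 / 4 := by
  norm_num [sigmaSq, Nat.choose]

lemma tendsto_sigmaSq_four_mul :
    Tendsto (fun k : ℕ ↦ sigmaSq (4 * k)) atTop (𝓝 (1 - 3 / π)) := by
  have hdouble : Tendsto (fun k : ℕ ↦ 2 * k) atTop atTop :=
    tendsto_id.const_mul_atTop' two_pos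
  have h := (((tendsto_sq_mul_returnProbSq_sub.const_mul 8).sub
    ((tendsto_sq_mul_returnProbSq_sub.comp hdouble).const_mul 4)).sub
    (tendsto_natCast_mul_returnProbSq.const_mul 2)).const_add 1
  convert h.congr fun k ↦ ?_ using 2
  · ring
  · rw [sigmaSq_four_mul, Function.comp_apply]
    push_cast
    ring

lemma sigmaSq_four_mul_sub_succ (k : ℕ) :
    sigmaSq (4 * k) - sigmaSq (4 * (k + 1)) =
      (8 * k + 3) * (32 * k ^ 2 + 24 * k + 3) / (4 * (2 * k + 1) ^ 2) * returnProbSq (2 * k) -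
        (16 * k ^ 2 + 20 * k + 3) / (2 * (k + 1)) * returnProbSq k := by
  rw [sigmaSq_four_mul, sigmaSq_four_mul, returnProbSq_succ, returnProbSq_two_mul_succ]
  push_cast
  field_simp
  ring

-- Both sides agree at `x = 0`, so the strictness of `sigmaSq_four_mul_succ_lt` has to come from the
-- bounds on `returnProbSq`.
lemma sigmaSq_sub_succ_coeff_div_le {x : ℝ} (hx : 0 ≤ x) :
    (16 * x ^ 2 + 20 * x + 3) / (2 * (x + 1)) / (x + 1 / 4) ≤
      (8 * x + 3) * (32 * x ^ 2 + 24 * x + 3) / (4 * (2 * x + 1) ^ 2) /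
        (2 * x + (1 / 4 + 1 / (64 * x + 8))) := by
  rw [← sub_nonneg]
  calc 0 ≤ 2 * x * (448 * x ^ 3 + 528 * x ^ 2 + 200 * x + 21) /
        ((x + 1) * (4 * x + 1) * (2 * x + 1) ^ 2 * (128 * x ^ 2 + 32 * x + 3)) := by positivity
    _ = _ := by
      have hweight : 2 * x + (1 / 4 + 1 / (64 * x + 8)) =
          (128 * x ^ 2 + 32 * x + 3) / (8 * (8 * x + 1)) := by
        field_simp
        ring
      rw [hweight]
      field_simp
      ring

lemma sigmaSq_four_mul_succ_lt (k : ℕ) : sigmaSq (4 * (k + 1)) < sigmaSq (4 * k) := by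
  have hupper : returnProbSq k < 1 / π / (k + 1 / 4) := by
    rw [lt_div_iff₀' (by positivity)]
    exact add_quarter_mul_returnProbSq_lt k
  have hlower : 1 / π / (2 * k + (1 / 4 + 1 / (64 * k + 8))) < returnProbSq (2 * k) := by
    rw [div_lt_iff₀' (by positivity)]
    have h := lt_add_quarter_add_inv_mul_returnProbSq (2 * k)
    push_cast at h
    rwa [← mul_assoc, show (32 : ℝ) * 2 = 64 by norm_num] at h
  rw [← sub_pos, sigmaSq_four_mul_sub_succ, sub_pos]
  calc (16 * k ^ 2 + 20 * k + 3) / (2 * (k + 1)) * returnProbSq k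
      < (16 * k ^ 2 + 20 * k + 3) / (2 * (k + 1)) * (1 / π / (k + 1 / 4)) := by gcongr
    _ = 1 / π * ((16 * k ^ 2 + 20 * k + 3) / (2 * (k + 1)) / (k + 1 / 4)) := by ring
    _ ≤ 1 / π * ((8 * k + 3) * (32 * k ^ 2 + 24 * k + 3) / (4 * (2 * k + 1) ^ 2) /
          (2 * k + (1 / 4 + 1 / (64 * k + 8)))) := by
        gcongr ?_ * ?_
        exact sigmaSq_sub_succ_coeff_div_le k.cast_nonneg
    _ = (8 * k + 3) * (32 * k ^ 2 + 24 * k + 3) / (4 * (2 * k + 1) ^ 2) *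
          (1 / π / (2 * k + (1 / 4 + 1 / (64 * k + 8)))) := by ring
    _ < (8 * k + 3) * (32 * k ^ 2 + 24 * k + 3) / (4 * (2 * k + 1) ^ 2) *
          returnProbSq (2 * k) := by gcongr

lemma strictAnti_sigmaSq_four_mul : StrictAnti fun k : ℕ ↦ sigmaSq (4 * k) :=
  strictAnti_nat_of_succ_lt sigmaSq_four_mul_succ_lt

lemma lt_sigmaSq_four_mul (k : ℕ) : 1 - 3 / π < sigmaSq (4 * k) :=
  (strictAnti_sigmaSq_four_mul.antitone.le_of_tendsto tendsto_sigmaSq_four_mul (k + 1)).trans_lt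
    (sigmaSq_four_mul_succ_lt k)

/-- For every integer `h` divisible by `4` with `h ≥ 4`:
`1 − 3/π < σ(h)² ≤ σ(4)² = 1/4`, `σ(·)²` is monotonic decreasing along
multiples of `4` (`σ(h+4)² < σ(h)²`), and `σ(h)² → 1 − 3/π` as `h → ∞`. -/
theorem sigmaSq_bounds_mono_limit :
    (∀ h : ℕ, 4 ∣ h → 4 ≤ h →
      1 - 3 / Real.pi < sigmaSq h ∧ sigmaSq h ≤ sigmaSq 4 ∧
      sigmaSq (h + 4) < sigmaSq h) ∧
    sigmaSq 4 = 1 / 4 ∧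
    Tendsto (fun k : ℕ => sigmaSq (4 * k)) atTop (nhds (1 - 3 / Real.pi)) := by
  refine ⟨?_, sigmaSq_four, tendsto_sigmaSq_four_mul⟩
  rintro _ ⟨k, rfl⟩ hk
  have hk_one : 1 ≤ k := by lia
  exact ⟨lt_sigmaSq_four_mul k, strictAnti_sigmaSq_four_mul.antitone hk_one,
    sigmaSq_four_mul_succ_lt k⟩
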